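/- Let β > 0 and let C be a circular component of G with loop ν. Then C is A(β)-harmonic (i.e. ρ(A(β)^C) = 1 and, in case C̄∖C ≠ ∅, ρ(A(β)^{C̄∖C}) < 1) if and only if the following three conditions hold: F(ν) = 0; F(μ) > 0 for every loop μ in C̄∖C; and for every component C' of G contained in C̄∖C there exists β' < β with ρ(A(β')^{C'}) = 1. -/

import Mathlib

open Filter Finset

/-- The spectral radius of a real matrix, `ρ(M) = lim_n ‖Mⁿ‖^{1/n}`
(computed with the entrywise ℓ¹-norm, and as a `limsup` so that it is always defined;
it is `0` for the matrix over the empty index type). -/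
noncomputable def specRad {n : Type*} [Fintype n] [DecidableEq n] (M : Matrix n n ℝ) : ℝ :=
  Filter.limsup (fun k : ℕ => (∑ i, ∑ j, |(M ^ k) i j|) ^ ((1 : ℝ) / (k : ℝ))) Filter.atTop

/-- The spectral radius `ρ(B^S)` of the submatrix of `B` obtained by restricting to `S × S`. -/
noncomputable def specRadOn {V : Type*} [Fintype V] (B : Matrix V V ℝ) (S : Set V) : ℝ :=
  letI : Fintype S := (Set.toFinite S).fintype
  letI : DecidableEq S := Classical.decEq _
  specRad (fun i j : S => B i.1 j.1)

variable {V E : Type*}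

/-- Consecutive edges of the list match up: `r(eᵢ) = s(eᵢ₊₁)`. -/
def ChainOK (src rng : E → V) (μ : List E) : Prop :=
  List.Chain' (fun e f => rng e = src f) μ

/-- A loop: a nonempty path `μ = e₁⋯eₙ` with `s(e₁) = r(eₙ)`. -/
def IsLoop (src rng : E → V) (μ : List E) : Prop :=
  ∃ h : μ ≠ [], ChainOK src rng μ ∧ src (μ.head h) = rng (μ.getLast h)

/-- A loop lying in the vertex set `C`. -/
def LoopIn (src rng : E → V) (C : Set V) (μ : List E) : Prop :=
  IsLoop src rng μ ∧ ∀ e ∈ μ, src e ∈ C ∧ rng e ∈ C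

/-- `v ⤳ w`: there is a (possibly length-0) path from `v` to `w`. -/
def GReaches (src rng : E → V) (v w : V) : Prop :=
  v = w ∨ ∃ μ : List E, ∃ h : μ ≠ [],
    ChainOK src rng μ ∧ src (μ.head h) = v ∧ rng (μ.getLast h) = w

/-- The closure of a set of vertices: all vertices that reach it. -/
def GClosure (src rng : E → V) (C : Set V) : Set V :=
  {v | ∃ w ∈ C, GReaches src rng v w}

/-- A component: an equivalence class of `v ∼ w` (mutual reachability) containing a loop. -/
def GIsComponent (src rng : E → V) (C : Set V) : Prop :=
  (∃ v, C = {w | GReaches src rng v w ∧ GReaches src rng w v}) ∧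
  ∃ μ : List E, LoopIn src rng C μ

/-- The property that the loop `μ` witnesses circularity of the component `C`: `μ` is a simple
loop visiting every vertex of `C`, and containing every edge of the graph joining vertices
of `C`. -/
def CircularWitness (src rng : E → V) (C : Set V) (μ : List E) : Prop :=
  LoopIn src rng C μ ∧ (μ.map src).Nodup ∧
  (∀ v ∈ C, v ∈ μ.map src) ∧
  (∀ e : E, src e ∈ C → rng e ∈ C → e ∈ μ)

/-- A circular component: a component containing, up to the choice of starting vertex,
exactly one loop. -/
def IsCircular (src rng : E → V) (C : Set V) : Prop :=
  GIsComponent src rng C ∧ ∃ μ : List E, CircularWitness src rng C μ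

/-- The matrix `A(β)` with entries `A(β)_{vw} = Σ_{e : v → w} e^{-β F(e)}`. -/
noncomputable def Amat [Fintype E] [DecidableEq V] (src rng : E → V) (F : E → ℝ) (β : ℝ) :
    Matrix V V ℝ :=
  fun v w => ∑ e ∈ Finset.univ.filter (fun e => src e = v ∧ rng e = w), Real.exp (-β * F e)

/-- `F` extended to paths: `F(e₁⋯eₙ) = F(e₁) + ⋯ + F(eₙ)`. -/
def Fpath (F : E → ℝ) (μ : List E) : ℝ := (μ.map F).sum


section SpecRadLemmas

lemma sr_pow_nonneg {n : Type*} [Fintype n] [DecidableEq n] {M : Matrix n n ℝ}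
    (hM : ∀ i j, 0 ≤ M i j) (k : ℕ) : ∀ i j, 0 ≤ (M ^ k) i j := by
  induction k with
  | zero => intro i j; rw [pow_zero, Matrix.one_apply]; split_ifs <;> norm_num
  | succ k ih =>
    intro i j
    rw [pow_succ, Matrix.mul_apply]
    exact Finset.sum_nonneg fun l _ => mul_nonneg (ih i l) (hM l j)

lemma sr_pow_cert {n : Type*} [Fintype n] [DecidableEq n] {M : Matrix n n ℝ}
    (hM : ∀ i j, 0 ≤ M i j) {x : n → ℝ} {r : ℝ} (hr : 0 < r)
    (h : ∀ i, ∑ j, M i j * x j ≤ r * x i) (k : ℕ) :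
    ∀ i, ∑ j, (M ^ k) i j * x j ≤ r ^ k * x i := by
  induction k with
  | zero => intro i; simp [Matrix.one_apply]
  | succ k ih =>
    intro i
    calc ∑ j, (M ^ (k+1)) i j * x j = ∑ l, (M ^ k) i l * ∑ j, M l j * x j := by
          simp_rw [pow_succ, Matrix.mul_apply, Finset.sum_mul, Finset.mul_sum]
          rw [Finset.sum_comm]
          simp_rw [mul_assoc]
      _ ≤ ∑ l, (M ^ k) i l * (r * x l) :=
          Finset.sum_le_sum fun l _ => mul_le_mul_of_nonneg_left (h l) (sr_pow_nonneg hM k i l)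
      _ = r * ∑ l, (M ^ k) i l * x l := by
          rw [Finset.mul_sum]; exact Finset.sum_congr rfl fun l _ => by ring
      _ ≤ r * (r ^ k * x i) := mul_le_mul_of_nonneg_left (ih i) hr.le
      _ = r ^ (k+1) * x i := by ring

lemma sr_bound {n : Type*} [Fintype n] [DecidableEq n] {M : Matrix n n ℝ}
    (hM : ∀ i j, 0 ≤ M i j) {x : n → ℝ} (hx : ∀ i, 0 < x i) {r : ℝ} (hr : 0 < r)
    (h : ∀ i, ∑ j, M i j * x j ≤ r * x i) :
    ∃ K : ℝ, 0 < K ∧ ∀ k, ∑ i, ∑ j, |(M ^ k) i j| ≤ K * r ^ k := by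
  refine ⟨∑ i, ∑ j, x i / x j + 1, ?_, fun k => ?_⟩
  · have : 0 ≤ ∑ i, ∑ j, x i / x j :=
      Finset.sum_nonneg fun i _ => Finset.sum_nonneg fun j _ => (div_pos (hx i) (hx j)).le
    linarith
  · have h1 : ∀ i j, |(M ^ k) i j| ≤ x i / x j * r ^ k := by
      intro i j
      rw [abs_of_nonneg (sr_pow_nonneg hM k i j)]
      have h2 : (M ^ k) i j * x j ≤ r ^ k * x i :=
        (Finset.single_le_sum (f := fun j => (M ^ k) i j * x j)
          (fun l _ => mul_nonneg (sr_pow_nonneg hM k i l) (hx l).le)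
          (Finset.mem_univ j)).trans (sr_pow_cert hM hr h k i)
      rw [div_mul_eq_mul_div, le_div_iff₀ (hx j)]
      linarith
    calc ∑ i, ∑ j, |(M ^ k) i j| ≤ ∑ i, ∑ j, x i / x j * r ^ k :=
          Finset.sum_le_sum fun i _ => Finset.sum_le_sum fun j _ => h1 i j
      _ = (∑ i, ∑ j, x i / x j) * r ^ k := by simp_rw [Finset.sum_mul]
      _ ≤ _ := mul_le_mul_of_nonneg_right (by linarith) (pow_nonneg hr.le k)

lemma sr_root_bound {n : Type*} [Fintype n] [DecidableEq n] {M : Matrix n n ℝ}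
    (hM : ∀ i j, 0 ≤ M i j) {x : n → ℝ} (hx : ∀ i, 0 < x i) {r : ℝ} (hr : 0 < r)
    (h : ∀ i, ∑ j, M i j * x j ≤ r * x i) :
    ∃ v : ℕ → ℝ, Tendsto v atTop (nhds r) ∧
      ∀ᶠ k : ℕ in atTop, (∑ i, ∑ j, |(M ^ k) i j|) ^ ((1 : ℝ) / (k : ℝ)) ≤ v k := by
  obtain ⟨K, hK, hb⟩ := sr_bound hM hx hr h
  refine ⟨fun k => K ^ ((1 : ℝ) / (k : ℝ)) * r, ?_, ?_⟩
  · have h1 : Tendsto (fun k : ℕ => (1 : ℝ) / (k : ℝ)) atTop (nhds 0) :=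
      tendsto_one_div_atTop_nhds_zero_nat
    have h2 : Tendsto (fun k : ℕ => K ^ ((1 : ℝ) / (k : ℝ))) atTop (nhds (K ^ (0 : ℝ))) :=
      ((Real.continuous_const_rpow hK.ne').tendsto 0).comp h1
    rw [Real.rpow_zero] at h2
    simpa using h2.mul_const r
  · filter_upwards [eventually_ge_atTop 1] with k hk
    have hk0 : k ≠ 0 := by omega
    have h0 : 0 ≤ ∑ i, ∑ j, |(M ^ k) i j| :=
      Finset.sum_nonneg fun i _ => Finset.sum_nonneg fun j _ => abs_nonneg _
    calc (∑ i, ∑ j, |(M ^ k) i j|) ^ ((1 : ℝ) / (k : ℝ))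
        ≤ (K * r ^ k) ^ ((1 : ℝ) / (k : ℝ)) := Real.rpow_le_rpow h0 (hb k) (by positivity)
      _ = K ^ ((1 : ℝ) / (k : ℝ)) * r := by
        rw [Real.mul_rpow hK.le (pow_nonneg hr.le k), one_div, Real.pow_rpow_inv_natCast hr.le hk0]

lemma sr_nonneg_seq {n : Type*} [Fintype n] [DecidableEq n] (M : Matrix n n ℝ) (k : ℕ) :
    0 ≤ (∑ i, ∑ j, |(M ^ k) i j|) ^ ((1 : ℝ) / (k : ℝ)) :=
  Real.rpow_nonneg (Finset.sum_nonneg fun i _ => Finset.sum_nonneg fun j _ => abs_nonneg _) _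

lemma specRad_le_of_cert {n : Type*} [Fintype n] [DecidableEq n] {M : Matrix n n ℝ}
    (hM : ∀ i j, 0 ≤ M i j) {x : n → ℝ} (hx : ∀ i, 0 < x i) {r : ℝ} (hr : 0 < r)
    (h : ∀ i, ∑ j, M i j * x j ≤ r * x i) : specRad M ≤ r := by
  obtain ⟨v, hv, hle⟩ := sr_root_bound hM hx hr h
  unfold specRad
  rw [← hv.limsup_eq]
  refine limsup_le_limsup hle ?_ hv.isBoundedUnder_le
  exact IsBoundedUnder.isCoboundedUnder_le
    (isBoundedUnder_of ⟨0, fun k => sr_nonneg_seq M k⟩)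

lemma exists_cert_of_specRad_lt {n : Type*} [Fintype n] [DecidableEq n] {M : Matrix n n ℝ}
    (hM : ∀ i j, 0 ≤ M i j) {r : ℝ} (h : specRad M < r) :
    0 < r ∧ ∃ x : n → ℝ, (∀ i, 0 < x i) ∧ ∀ i, ∑ j, M i j * x j ≤ r * x i := by
  have hbdd : IsBoundedUnder (· ≤ ·) atTop
      (fun k : ℕ => (∑ i, ∑ j, |(M ^ k) i j|) ^ ((1 : ℝ) / (k : ℝ))) := by
    have hs : 0 ≤ ∑ i, ∑ j, M i j :=
      Finset.sum_nonneg fun i _ => Finset.sum_nonneg fun j _ => hM i j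
    obtain ⟨v, hv, hle⟩ := sr_root_bound hM (x := fun _ => 1) (fun _ => one_pos)
      (r := ∑ i, ∑ j, M i j + 1) (by linarith) (by
        intro i
        simp only [mul_one]
        have := Finset.single_le_sum (f := fun i => ∑ j, M i j)
          (fun l _ => Finset.sum_nonneg fun j _ => hM l j) (Finset.mem_univ i)
        linarith)
    exact hv.isBoundedUnder_le.mono_le hle
  have hev := eventually_lt_of_limsup_lt h hbdd
  obtain ⟨N, hN, hN1⟩ := (hev.and (eventually_ge_atTop 1)).exists
  have hN0 : N ≠ 0 := by omega
  have hr : 0 < r := (sr_nonneg_seq M N).trans_lt hN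
  have h0 : 0 ≤ ∑ i, ∑ j, |(M ^ N) i j| :=
      Finset.sum_nonneg fun i _ => Finset.sum_nonneg fun j _ => abs_nonneg _
  have hNle : ∑ i, ∑ j, |(M ^ N) i j| ≤ r ^ N := by
    have := pow_le_pow_left₀ (sr_nonneg_seq M N) hN.le N
    rwa [one_div, Real.rpow_inv_natCast_pow h0 hN0] at this
  have hrow : ∀ i, ∑ j, (M ^ N) i j ≤ r ^ N := by
    intro i
    refine le_trans (Finset.sum_le_sum fun j _ => le_abs_self _) (le_trans ?_ hNle)
    exact Finset.single_le_sum (f := fun i => ∑ j, |(M ^ N) i j|)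
      (fun l _ => Finset.sum_nonneg fun j _ => abs_nonneg _) (Finset.mem_univ i)
  refine ⟨hr, fun i => ∑ k ∈ Finset.range N, (r ^ k)⁻¹ * ∑ j, (M ^ k) i j, ?_, ?_⟩
  · intro i
    refine lt_of_lt_of_le one_pos ?_
    have := Finset.single_le_sum (f := fun k => (r ^ k)⁻¹ * ∑ j, (M ^ k) i j)
      (s := Finset.range N)
      (fun k _ => mul_nonneg (inv_nonneg.2 (pow_nonneg hr.le k))
        (Finset.sum_nonneg fun j _ => sr_pow_nonneg hM k i j))
      (Finset.mem_range.2 (show 0 < N by omega))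
    simpa [Matrix.one_apply] using this
  · intro i
    have hsum : ∑ j, M i j * ∑ k ∈ Finset.range N, (r ^ k)⁻¹ * ∑ l, (M ^ k) j l
        = ∑ k ∈ Finset.range N, r * ((r ^ (k+1))⁻¹ * ∑ l, (M ^ (k+1)) i l) := by
      simp_rw [Finset.mul_sum]
      rw [Finset.sum_comm]
      refine Finset.sum_congr rfl fun k _ => ?_
      rw [Finset.sum_comm]
      refine Finset.sum_congr rfl fun l _ => ?_
      rw [pow_succ' M, Matrix.mul_apply, Finset.mul_sum, Finset.mul_sum]
      refine Finset.sum_congr rfl fun j _ => ?_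
      rw [pow_succ]
      field_simp
    rw [hsum, ← Finset.mul_sum]
    refine mul_le_mul_of_nonneg_left ?_ hr.le
    have e1 := Finset.sum_range_succ (fun k => (r ^ k)⁻¹ * ∑ j, (M ^ k) i j) N
    have e2 := Finset.sum_range_succ' (fun k => (r ^ k)⁻¹ * ∑ j, (M ^ k) i j) N
    have e3 : (r ^ N)⁻¹ * ∑ j, (M ^ N) i j ≤ 1 := by
      rw [inv_mul_le_iff₀ (pow_pos hr N)]
      simpa using hrow i
    have e4 : (r ^ 0)⁻¹ * ∑ j, (M ^ 0) i j = 1 := by simp [Matrix.one_apply]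
    linarith

end SpecRadLemmas

section Certs

open Classical in
/-- A positive sub-eigenvector of `A(β)^S` for `r`. -/
def Cert {V E : Type*} [Fintype E] (src rng : E → V) (F : E → ℝ) (β : ℝ) (S : Set V) (r : ℝ)
    (x : V → ℝ) : Prop :=
  (∀ v, 0 < x v) ∧ ∀ v ∈ S,
    ∑ e ∈ Finset.univ.filter (fun e => src e = v ∧ rng e ∈ S), Real.exp (-β * F e) * x (rng e)
      ≤ r * x v

open Classical in
lemma amat_bridge {V E : Type*} [Fintype V] [DecidableEq V] [Fintype E]
    (src rng : E → V) (F : E → ℝ) (β : ℝ) (S : Set V) [Fintype S] (x : V → ℝ) (v : V)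
    [DecidablePred (fun e => src e = v ∧ rng e ∈ S)] :
    ∑ j : S, Amat src rng F β v j.1 * x j.1 =
    ∑ e ∈ Finset.univ.filter (fun e => src e = v ∧ rng e ∈ S),
      Real.exp (-β * F e) * x (rng e) := by
  have h1 : ∑ j : S, Amat src rng F β v j.1 * x j.1
      = ∑ w ∈ Finset.univ.filter (fun w => w ∈ S), Amat src rng F β v w * x w := by
    symm
    apply Finset.sum_subtype
    simp
  rw [h1, Finset.sum_filter, Finset.sum_filter]
  have h2 : ∀ w, (if w ∈ S then Amat src rng F β v w * x w else 0) =
      ∑ e : E, if src e = v ∧ rng e = w ∧ w ∈ S then Real.exp (-β * F e) * x (rng e) else 0 := by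
    intro w
    split_ifs with hw
    · unfold Amat
      rw [Finset.sum_mul, Finset.sum_filter]
      refine Finset.sum_congr rfl fun e _ => ?_
      by_cases h : src e = v ∧ rng e = w
      · simp [h, hw]
      · rw [if_neg h, if_neg (fun h' => h ⟨h'.1, h'.2.1⟩)]
    · symm
      exact Finset.sum_eq_zero fun e _ => if_neg fun h => hw h.2.2
  simp_rw [h2]
  rw [Finset.sum_comm]
  refine Finset.sum_congr rfl fun e _ => ?_
  rw [Finset.sum_eq_single (rng e)]
  · simp
  · intro b _ hb
    exact if_neg fun h => hb h.2.1.symm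
  · simp

lemma amat_nonneg {V E : Type*} [DecidableEq V] [Fintype E]
    (src rng : E → V) (F : E → ℝ) (β : ℝ) (v w : V) : 0 ≤ Amat src rng F β v w :=
  Finset.sum_nonneg fun _ _ => (Real.exp_pos _).le

lemma specRadOn_le_of_cert {V E : Type*} [Fintype V] [DecidableEq V] [Fintype E]
    {src rng : E → V} {F : E → ℝ} {β : ℝ} {S : Set V} {r : ℝ} {x : V → ℝ} (hr : 0 < r)
    (h : Cert src rng F β S r x) : specRadOn (Amat src rng F β) S ≤ r := by
  unfold specRadOn
  let _ : Fintype S := (Set.toFinite S).fintype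
  let _ : DecidableEq S := Classical.decEq _
  refine specRad_le_of_cert (M := fun i j : S => Amat src rng F β i.1 j.1)
    (fun i j => amat_nonneg _ _ _ _ _ _) (x := fun i : S => x i.1) (fun i => h.1 _) hr ?_
  intro i
  classical
  rw [amat_bridge src rng F β S x i.1]
  convert h.2 i.1 i.2

open Classical in
lemma exists_cert {V E : Type*} [Fintype V] [DecidableEq V] [Fintype E]
    {src rng : E → V} {F : E → ℝ} {β : ℝ} {S : Set V} {r : ℝ}
    (h : specRadOn (Amat src rng F β) S < r) : 0 < r ∧ ∃ x, Cert src rng F β S r x := by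
  unfold specRadOn at h
  let _ : Fintype S := (Set.toFinite S).fintype
  let _ : DecidableEq S := Classical.decEq _
  obtain ⟨hr, x, hx, hc⟩ := exists_cert_of_specRad_lt
    (M := fun i j : S => Amat src rng F β i.1 j.1)
    (fun i j => amat_nonneg _ _ _ _ _ _) h
  refine ⟨hr, fun v => if h : v ∈ S then x ⟨v, h⟩ else 1, ?_, ?_⟩
  · intro v
    dsimp only
    split_ifs
    · exact hx _
    · exact one_pos
  · intro v hv
    have := hc ⟨v, hv⟩
    have hb := amat_bridge src rng F β S (fun v => if h : v ∈ S then x ⟨v, h⟩ else 1) v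
    have hb2 : ∑ j : S, Amat src rng F β v j.1 * (fun v => if h : v ∈ S then x ⟨v, h⟩ else 1) j.1
        ≤ r * (fun v => if h : v ∈ S then x ⟨v, h⟩ else 1) v := by
      simpa [hv] using this
    rw [hb] at hb2
    convert hb2

lemma Cert.mono_set {V E : Type*} [Fintype E] 
    {src rng : E → V} {F : E → ℝ} {β : ℝ} {S T : Set V} {r : ℝ} {x : V → ℝ}
    (h : Cert src rng F β S r x) (hT : T ⊆ S) : Cert src rng F β T r x := by
  classical
  refine ⟨h.1, fun v hv => le_trans ?_ (h.2 v (hT hv))⟩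
  refine Finset.sum_le_sum_of_subset_of_nonneg ?_ ?_
  · intro e
    simp only [Finset.mem_filter, Finset.mem_univ, true_and]
    exact fun h => ⟨h.1, hT h.2⟩
  · intro e _ _
    exact mul_nonneg (Real.exp_pos _).le (h.1 _).le

/-- Comparison of certificates along a potential. -/
lemma Cert.potential {V E : Type*} [Fintype E] 
    {src rng : E → V} {F : E → ℝ} {β : ℝ} {S : Set V} {r : ℝ} {x : V → ℝ}
    (h : Cert src rng F β S r x) (β' d : ℝ) (p : V → ℝ)
    (hp : ∀ e, src e ∈ S → rng e ∈ S → -β' * F e ≤ d - β * F e + p (src e) - p (rng e)) :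
    Cert src rng F β' S (r * Real.exp d) (fun v => Real.exp (p v) * x v) := by
  classical
  refine ⟨fun v => mul_pos (Real.exp_pos _) (h.1 v), fun v hv => ?_⟩
  calc _ ≤ ∑ e ∈ Finset.univ.filter (fun e => src e = v ∧ rng e ∈ S),
        (Real.exp d * Real.exp (p v)) * (Real.exp (-β * F e) * x (rng e)) := by
        refine Finset.sum_le_sum fun e he => ?_
        simp only [Finset.mem_filter, Finset.mem_univ, true_and] at he
        have h1 := hp e (he.1 ▸ hv) he.2
        rw [he.1] at h1
        rw [← mul_assoc, ← mul_assoc, ← Real.exp_add, ← Real.exp_add, ← Real.exp_add]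
        refine mul_le_mul_of_nonneg_right (Real.exp_le_exp.2 ?_) (h.1 _).le
        linarith
    _ = (Real.exp d * Real.exp (p v)) * _ := (Finset.mul_sum _ _ _).symm
    _ ≤ (Real.exp d * Real.exp (p v)) * (r * x v) :=
        mul_le_mul_of_nonneg_left (h.2 v hv) (by positivity)
    _ = _ := by ring

lemma Cert.edge {V E : Type*} [Fintype E] 
    {src rng : E → V} {F : E → ℝ} {β : ℝ} {S : Set V} {r : ℝ} {x : V → ℝ}
    (h : Cert src rng F β S r x) (e : E) (h1 : src e ∈ S) (h2 : rng e ∈ S) :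
    Real.exp (-β * F e) * x (rng e) ≤ r * x (src e) := by
  classical
  refine le_trans ?_ (h.2 _ h1)
  exact Finset.single_le_sum (f := fun e => Real.exp (-β * F e) * x (rng e))
    (fun e _ => mul_nonneg (Real.exp_pos _).le (h.1 _).le) (by simp [h2])

end Certs

section Paths

/-- `μ` is a path from `v` to `w`. -/
def IsP {V E : Type*} (src rng : E → V) : V → List E → V → Prop
  | v, [], w => v = w
  | v, e :: μ, w => src e = v ∧ IsP src rng (rng e) μ w

lemma isP_iff {V E : Type*} {src rng : E → V} : ∀ (μ : List E) (h : μ ≠ []) (v w : V),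
    IsP src rng v μ w ↔
      ChainOK src rng μ ∧ src (μ.head h) = v ∧ rng (μ.getLast h) = w := by
  intro μ
  induction μ with
  | nil => intro h; exact absurd rfl h
  | cons e μ ih =>
    intro _ v w
    cases μ with
    | nil => simp [IsP, ChainOK, List.Chain']
    | cons f μ =>
      have := ih (by simp) (rng e) w
      rw [IsP, this]
      simp only [ChainOK, List.Chain', List.head_cons, List.getLast_cons_cons, List.isChain_cons_cons]
      constructor
      · rintro ⟨h1, h2, h3, h4⟩
        exact ⟨⟨h3.symm, h2⟩, h1, h4⟩
      · rintro ⟨⟨h3, h2⟩, h1, h4⟩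
        exact ⟨h1, h2, h3.symm, h4⟩

lemma isP_append {V E : Type*} {src rng : E → V} : ∀ (μ ν : List E) (u w : V),
    IsP src rng u (μ ++ ν) w ↔ ∃ v, IsP src rng u μ v ∧ IsP src rng v ν w := by
  intro μ
  induction μ with
  | nil => intro ν u w; simp [IsP]
  | cons e μ ih =>
    intro ν u w
    simp only [List.cons_append, IsP, ih]
    constructor
    · rintro ⟨h, v, h1, h2⟩; exact ⟨v, ⟨h, h1⟩, h2⟩
    · rintro ⟨v, ⟨h, h1⟩, h2⟩; exact ⟨h, v, h1, h2⟩

lemma reaches_iff {V E : Type*} {src rng : E → V} {v w : V} :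
    GReaches src rng v w ↔ ∃ μ, IsP src rng v μ w := by
  constructor
  · rintro (rfl | ⟨μ, h, h1⟩)
    · exact ⟨[], rfl⟩
    · exact ⟨μ, (isP_iff μ h v w).2 h1⟩
  · rintro ⟨μ, h⟩
    by_cases h0 : μ = []
    · subst h0; exact Or.inl h
    · exact Or.inr ⟨μ, h0, (isP_iff μ h0 v w).1 h⟩

lemma reaches_refl {V E : Type*} {src rng : E → V} (v : V) : GReaches src rng v v := Or.inl rfl

lemma reaches_trans {V E : Type*} {src rng : E → V} {u v w : V}
    (h1 : GReaches src rng u v) (h2 : GReaches src rng v w) : GReaches src rng u w := by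
  rw [reaches_iff] at *
  obtain ⟨μ, hμ⟩ := h1
  obtain ⟨ν, hν⟩ := h2
  exact ⟨μ ++ ν, (isP_append _ _ _ _).2 ⟨v, hμ, hν⟩⟩

lemma reaches_edge {V E : Type*} {src rng : E → V} (e : E) :
    GReaches src rng (src e) (rng e) := reaches_iff.2 ⟨[e], rfl, rfl⟩

lemma isLoop_iff {V E : Type*} {src rng : E → V} {μ : List E} :
    IsLoop src rng μ ↔ μ ≠ [] ∧ ∃ v, IsP src rng v μ v := by
  constructor
  · rintro ⟨h, h1, h2⟩
    exact ⟨h, _, (isP_iff μ h _ _).2 ⟨h1, rfl, h2.symm⟩⟩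
  · rintro ⟨h, v, h1⟩
    have := (isP_iff μ h _ _).1 h1
    exact ⟨h, this.1, this.2.1.trans this.2.2.symm⟩

lemma isP_mem {V E : Type*} {src rng : E → V} : ∀ (μ : List E) (v w : V), IsP src rng v μ w →
    ∀ e ∈ μ, GReaches src rng v (src e) ∧ GReaches src rng (rng e) w := by
  intro μ v w h e he
  obtain ⟨a, b, rfl⟩ := List.append_of_mem he
  rw [isP_append] at h
  obtain ⟨u, h1, h2, h3⟩ := h
  exact ⟨reaches_iff.2 ⟨a, h2 ▸ h1⟩, reaches_iff.2 ⟨b, h3⟩⟩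

lemma Cert.path {V E : Type*} [Fintype E]
    {src rng : E → V} {F : E → ℝ} {β : ℝ} {S : Set V} {r : ℝ} {x : V → ℝ} (hr : 0 < r)
    (h : Cert src rng F β S r x) : ∀ (μ : List E) (v w : V), IsP src rng v μ w →
    (∀ e ∈ μ, src e ∈ S ∧ rng e ∈ S) →
    Real.exp (-β * Fpath F μ) * x w ≤ r ^ μ.length * x v := by
  intro μ
  induction μ with
  | nil => intro v w hp _; simp only [IsP] at hp; subst hp; simp [Fpath]
  | cons e μ ih =>
    intro v w hp hS
    obtain ⟨rfl, hp⟩ := hp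
    have h1 := ih _ _ hp fun f hf => hS f (List.mem_cons_of_mem _ hf)
    have h2 := h.edge e (hS e (by simp)).1 (hS e (by simp)).2
    have h3 : Fpath F (e :: μ) = F e + Fpath F μ := by simp [Fpath]
    calc Real.exp (-β * Fpath F (e :: μ)) * x w
        = Real.exp (-β * F e) * (Real.exp (-β * Fpath F μ) * x w) := by
          rw [← mul_assoc, ← Real.exp_add, h3]; ring_nf
      _ ≤ Real.exp (-β * F e) * (r ^ μ.length * x (rng e)) :=
          mul_le_mul_of_nonneg_left h1 (Real.exp_pos _).le
      _ = r ^ μ.length * (Real.exp (-β * F e) * x (rng e)) := by ring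
      _ ≤ r ^ μ.length * (r * x (src e)) :=
          mul_le_mul_of_nonneg_left h2 (pow_nonneg hr.le _)
      _ = _ := by rw [List.length_cons]; ring

lemma loop_le_specRadOn {V E : Type*} [Fintype V] [DecidableEq V] [Fintype E]
    {src rng : E → V} (F : E → ℝ) (β : ℝ) {S : Set V} {μ : List E}
    (hμ : LoopIn src rng S μ) :
    Real.exp (-β * Fpath F μ / μ.length) ≤ specRadOn (Amat src rng F β) S := by
  refine le_of_forall_gt_imp_ge_of_dense fun r hr => ?_
  obtain ⟨hr0, x, hx⟩ := exists_cert hr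
  obtain ⟨h0, v, hv⟩ := isLoop_iff.1 hμ.1
  have h1 := hx.path hr0 μ v v hv hμ.2
  have h2 := le_of_mul_le_mul_right h1 (hx.1 v)
  have hl : μ.length ≠ 0 := by simpa using h0
  refine le_of_pow_le_pow_left₀ hl hr0.le ?_
  rw [← Real.exp_nat_mul]
  convert h2 using 2
  field_simp

/-- Removing simple loops. -/
lemma reduce_path {V E : Type*} {src rng : E → V} {g : E → ℝ} {S : Set V}
    (hl : ∀ l, LoopIn src rng S l → (l.map src).Nodup → 0 ≤ Fpath g l) :
    ∀ (μ : List E) (v w : V), IsP src rng v μ w → (∀ e ∈ μ, src e ∈ S ∧ rng e ∈ S) →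
    ∃ μ', IsP src rng v μ' w ∧ (∀ e ∈ μ', src e ∈ S ∧ rng e ∈ S) ∧ (μ'.map src).Nodup ∧
      Fpath g μ' ≤ Fpath g μ := by
  intro μ
  induction μ with
  | nil => intro v w h _; exact ⟨[], h, by simp, by simp, le_rfl⟩
  | cons e μ ih =>
    intro v w hp hS
    obtain ⟨rfl, hp⟩ := hp
    obtain ⟨μ', h1, h2, h3, h4⟩ := ih _ _ hp fun f hf => hS f (List.mem_cons_of_mem _ hf)
    have h5 : Fpath g (e :: μ) = g e + Fpath g μ := by simp [Fpath]
    by_cases hm : src e ∈ μ'.map src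
    · obtain ⟨f, hf, hfe⟩ := List.mem_map.1 hm
      obtain ⟨a, b, rfl⟩ := List.append_of_mem hf
      rw [isP_append] at h1
      obtain ⟨u, h6, h7, h8⟩ := h1
      have hu : u = src e := h7.symm.trans hfe
      subst hu
      rw [List.map_append, List.map_cons, List.nodup_append] at h3
      have hloop : 0 ≤ Fpath g (e :: a) := by
        refine hl _ ⟨isLoop_iff.2 ⟨by simp, src e, rfl, h6⟩, ?_⟩ ?_
        · intro k hk
          rcases List.mem_cons.1 hk with rfl | hk
          · exact hS _ (by simp)
          · exact h2 k (by simp [hk])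
        · rw [List.map_cons, List.nodup_cons]
          refine ⟨fun hin => ?_, h3.1⟩
          exact h3.2.2 _ hin (src f) (by simp) hfe.symm
      refine ⟨f :: b, ⟨hfe, h8⟩, fun k hk => h2 k (List.mem_append_right _ hk), h3.2.1, ?_⟩
      simp only [Fpath, List.map_append, List.sum_append, List.map_cons, List.sum_cons] at *
      linarith
    · refine ⟨e :: μ', ⟨rfl, h1⟩, ?_, ?_, ?_⟩
      · intro k hk
        rcases List.mem_cons.1 hk with rfl | hk
        · exact hS _ (by simp)
        · exact h2 k hk
      · rw [List.map_cons, List.nodup_cons]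
        exact ⟨hm, h3⟩
      · simp only [Fpath, List.map_cons, List.sum_cons] at *
        linarith

lemma finite_nodup {V E : Type*} [Fintype V] [Fintype E] (src : E → V) :
    {μ : List E | (μ.map src).Nodup}.Finite := by
  refine (List.finite_length_le E (Fintype.card V)).subset fun μ hμ => ?_
  have := List.Nodup.length_le_card hμ
  simpa using this

lemma fpath_sub {E : Type*} (F : E → ℝ) (c : ℝ) (l : List E) :
    Fpath (fun e => F e - c) l = Fpath F l - c * l.length := by
  induction l with
  | nil => simp [Fpath]
  | cons e l ih =>
    simp only [Fpath, List.map_cons, List.sum_cons, List.length_cons] at *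
    rw [ih]; push_cast; ring

lemma exists_potential {V E : Type*} [Fintype V] [Fintype E] {src rng : E → V} {F : E → ℝ}
    {S : Set V} (hpos : ∀ μ, LoopIn src rng S μ → 0 < Fpath F μ) :
    ∃ δ : ℝ, 0 < δ ∧ ∃ h : V → ℝ, ∀ e, src e ∈ S → rng e ∈ S →
      δ + h (src e) - h (rng e) ≤ F e := by
  have hδ : ∃ δ : ℝ, 0 < δ ∧ ∀ l, (l.map src).Nodup → LoopIn src rng S l →
      0 ≤ Fpath (fun e => F e - δ) l := by
    have : ∀ᶠ δ : ℝ in nhdsWithin 0 (Set.Ioi 0), ∀ l ∈ {μ : List E | (μ.map src).Nodup},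
        LoopIn src rng S l → 0 ≤ Fpath (fun e => F e - δ) l := by
      rw [Filter.eventually_all_finite (finite_nodup src)]
      intro l _
      by_cases hl : LoopIn src rng S l
      · have ht : Tendsto (fun δ : ℝ => Fpath F l - δ * l.length) (nhdsWithin 0 (Set.Ioi 0))
            (nhds (Fpath F l - 0 * l.length)) := by
          apply tendsto_nhdsWithin_of_tendsto_nhds
          exact (Continuous.tendsto (by fun_prop) 0)
        have hp := hpos l hl
        filter_upwards [ht.eventually_const_lt (u := 0) (by simpa using hp)] with δ hδ _
        rw [fpath_sub]
        exact hδ.le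
      · exact Filter.Eventually.of_forall fun _ h => absurd h hl
    obtain ⟨δ, h1, h2⟩ := (this.and self_mem_nhdsWithin).exists
    exact ⟨δ, h2, h1⟩
  obtain ⟨δ, hδ0, hδ⟩ := hδ
  refine ⟨δ, hδ0, ?_⟩
  have hmin : ∀ v : V, ∃ μ : List E, ((μ.map src).Nodup ∧ (∀ e ∈ μ, src e ∈ S ∧ rng e ∈ S) ∧
      ∃ w, IsP src rng v μ w) ∧ ∀ μ' : List E, (μ'.map src).Nodup →
        (∀ e ∈ μ', src e ∈ S ∧ rng e ∈ S) → (∃ w, IsP src rng v μ' w) →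
        Fpath (fun e => F e - δ) μ ≤ Fpath (fun e => F e - δ) μ' := by
    intro v
    obtain ⟨μ, hμ, hm⟩ := Set.exists_min_image
      {μ : List E | (μ.map src).Nodup ∧ (∀ e ∈ μ, src e ∈ S ∧ rng e ∈ S) ∧
        ∃ w, IsP src rng v μ w} (Fpath (fun e => F e - δ))
      ((finite_nodup src).subset fun μ h => h.1) ⟨[], by simp, by simp, v, rfl⟩
    exact ⟨μ, hμ, fun μ' a b c => hm μ' ⟨a, b, c⟩⟩
  choose m hm1 hm2 using hmin
  refine ⟨fun v => Fpath (fun e => F e - δ) (m v), fun e h1 h2 => ?_⟩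
  obtain ⟨h3, h4, w, h5⟩ := hm1 (rng e)
  obtain ⟨μ', h6, h7, h8, h9⟩ := reduce_path (g := fun e => F e - δ) (S := S)
    (fun l a b => hδ l b a) (e :: m (rng e)) (src e) w ⟨rfl, h5⟩ (by
      intro k hk
      rcases List.mem_cons.1 hk with rfl | hk
      · exact ⟨h1, h2⟩
      · exact h4 k hk)
  have h10 := hm2 (src e) μ' h8 h7 ⟨w, h6⟩
  have h11 : Fpath (fun e => F e - δ) (e :: m (rng e))
    = F e - δ + Fpath (fun e => F e - δ) (m (rng e)) := by simp [Fpath]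
  simp only
  linarith

lemma specRadOn_lt_of_loops {V E : Type*} [Fintype V] [DecidableEq V] [Fintype E]
    {src rng : E → V} {F : E → ℝ} {S : Set V} {β β' : ℝ} (hb : β' < β)
    (hpos : ∀ μ, LoopIn src rng S μ → 0 < Fpath F μ)
    (h1 : specRadOn (Amat src rng F β') S = 1) : specRadOn (Amat src rng F β) S < 1 := by
  obtain ⟨δ, hδ, h, hh⟩ := exists_potential hpos
  have ht : 0 < β - β' := sub_pos.2 hb
  have htd : 0 < (β - β') * δ := mul_pos ht hδ
  obtain ⟨hr, x, hx⟩ := exists_cert (src := src) (rng := rng) (F := F) (β := β') (S := S)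
    (r := Real.exp ((β - β') * δ / 2)) (by rw [h1, Real.one_lt_exp_iff]; linarith)
  have := hx.potential β (-((β - β') * δ)) (fun v => -((β - β') * h v)) (by
    intro e h2 h3
    have := mul_le_mul_of_nonneg_left (hh e h2 h3) ht.le
    nlinarith)
  refine (specRadOn_le_of_cert (by positivity) this).trans_lt ?_
  rw [← Real.exp_add, Real.exp_lt_one_iff]
  linarith

lemma specRadOn_lip {V E : Type*} [Fintype V] [DecidableEq V] [Fintype E]
    (src rng : E → V) (F : E → ℝ) (S : Set V) (b b' : ℝ) :
    specRadOn (Amat src rng F b') S ≤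
      Real.exp ((∑ e, |F e|) * |b' - b|) * specRadOn (Amat src rng F b) S := by
  set d := (∑ e, |F e|) * |b' - b| with hd
  have key : Real.exp (-d) * specRadOn (Amat src rng F b') S ≤ specRadOn (Amat src rng F b) S := by
    refine le_of_forall_gt_imp_ge_of_dense fun r hr => ?_
    obtain ⟨hr0, x, hx⟩ := exists_cert hr
    have := hx.potential b' d (fun _ => 0) (by
      intro e _ _
      have h1 : |F e| ≤ ∑ e, |F e| :=
        Finset.single_le_sum (f := fun e => |F e|) (fun _ _ => abs_nonneg _) (Finset.mem_univ e)
      have h2 : |F e * (b' - b)| ≤ d := by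
        rw [abs_mul, hd]; exact mul_le_mul_of_nonneg_right h1 (abs_nonneg _)
      have := neg_abs_le (F e * (b' - b))
      nlinarith)
    have h3 := specRadOn_le_of_cert (by positivity) this
    calc _ ≤ Real.exp (-d) * (r * Real.exp d) := mul_le_mul_of_nonneg_left h3 (Real.exp_pos _).le
      _ = r * (Real.exp (-d) * Real.exp d) := by ring
      _ = r := by rw [← Real.exp_add]; simp
  rw [Real.exp_neg, inv_mul_le_iff₀ (Real.exp_pos _)] at key
  exact key

lemma exists_beta {V E : Type*} [Fintype V] [DecidableEq V] [Fintype E]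
    {src rng : E → V} {F : E → ℝ} {S : Set V} {β : ℝ} (hβ : 0 < β)
    (hl : ∃ μ, LoopIn src rng S μ) (h : specRadOn (Amat src rng F β) S < 1) :
    ∃ β' : ℝ, β' < β ∧ specRadOn (Amat src rng F β') S = 1 := by
  obtain ⟨μ, hμ⟩ := hl
  have hpos : ∀ b, 0 < specRadOn (Amat src rng F b) S := fun b =>
    (Real.exp_pos _).trans_le (loop_le_specRadOn F b hμ)
  have hcont : Continuous fun b => Real.log (specRadOn (Amat src rng F b) S) := by
    have hM : 0 ≤ ∑ e, |F e| := Finset.sum_nonneg fun _ _ => abs_nonneg _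
    refine (LipschitzWith.of_le_add_mul (f := fun b => Real.log (specRadOn (Amat src rng F b) S))
      ⟨∑ e, |F e|, hM⟩ fun b' b => ?_).continuous
    have h1 := Real.log_le_log (hpos b') (specRadOn_lip src rng F S b b')
    rw [Real.log_mul (Real.exp_pos _).ne' (hpos b).ne', Real.log_exp] at h1
    rw [Real.dist_eq]
    change _ ≤ _ + (∑ e, |F e|) * _
    linarith
  have h0 : 0 ≤ Real.log (specRadOn (Amat src rng F 0) S) := by
    apply Real.log_nonneg
    simpa using loop_le_specRadOn F 0 hμ
  have h1 : Real.log (specRadOn (Amat src rng F β) S) ≤ 0 := Real.log_nonpos (hpos β).le h.le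
  obtain ⟨b, hb, hb0⟩ := intermediate_value_Icc' hβ.le hcont.continuousOn ⟨h1, h0⟩
  have hb1 : specRadOn (Amat src rng F b) S = 1 := by
    have := Real.exp_log (hpos b)
    simp only at hb0
    rw [hb0, Real.exp_zero] at this
    exact this.symm
  refine ⟨b, lt_of_le_of_ne hb.2 ?_, hb1⟩
  rintro rfl
  exact h.ne hb1

end Paths

section Circular

lemma circular_potential {V E : Type*}
    {src rng : E → V} {F : E → ℝ} {C : Set V} {ν : List E} (hν : CircularWitness src rng C ν) :
    ∃ H : V → ℝ, ∀ e ∈ ν, F e - Fpath F ν / ν.length = H (src e) - H (rng e) := by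
  classical
  obtain ⟨⟨⟨h0, hch, hcl⟩, hin⟩, hnd, -, -⟩ := hν
  set g : E → ℝ := fun e => F e - Fpath F ν / ν.length with hg
  have hlen : 0 < ν.length := List.length_pos_iff.2 h0
  have hG0 : Fpath g ν = 0 := by
    rw [hg, fpath_sub]
    field_simp
    ring
  set H : V → ℝ := fun v => Fpath g (ν.drop ((ν.map src).idxOf v)) with hH
  have hidx : ∀ i (hi : i < ν.length), H (src ν[i]) = Fpath g (ν.drop i) := by
    intro i hi
    have := hnd.idxOf_getElem i (by simpa using hi)
    rw [List.getElem_map] at this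
    simp only [hH]
    rw [this]
  refine ⟨H, fun e he => ?_⟩
  obtain ⟨i, hi, rfl⟩ := List.getElem_of_mem he
  have h1 : H (rng ν[i]) = Fpath g (ν.drop (i+1)) := by
    by_cases hi1 : i + 1 < ν.length
    · have h2 : rng ν[i] = src ν[i+1] := List.isChain_iff_getElem.1 hch i hi1
      rw [h2, hidx]
    · have h2 : rng ν[i] = src ν[0] := by
        rw [List.head_eq_getElem, List.getLast_eq_getElem] at hcl
        rw [hcl]
        congr 2
        omega
      rw [h2, hidx, List.drop_zero, hG0, List.drop_eq_nil_of_le (by omega)]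
      simp [Fpath]
  rw [hidx i hi, h1, List.drop_eq_getElem_cons hi]
  have h3 : Fpath g (ν[i] :: ν.drop (i+1)) = g ν[i] + Fpath g (ν.drop (i+1)) := by
    simp only [Fpath, List.map_cons, List.sum_cons]
  rw [h3]
  ring

lemma circular_specRadOn {V E : Type*} [Fintype V] [DecidableEq V] [Fintype E]
    {src rng : E → V} (F : E → ℝ) (β : ℝ) {C : Set V} {ν : List E}
    (hν : CircularWitness src rng C ν) :
    specRadOn (Amat src rng F β) C = Real.exp (-β * Fpath F ν / ν.length) := by
  refine le_antisymm ?_ (loop_le_specRadOn F β hν.1)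
  obtain ⟨H, hH⟩ := circular_potential (F := F) hν
  refine specRadOn_le_of_cert (x := fun v => Real.exp (-β * H v)) (Real.exp_pos _)
    ⟨fun v => Real.exp_pos _, fun v hv => ?_⟩
  classical
  obtain ⟨-, hnd, -, hed⟩ := hν
  set r := Real.exp (-β * Fpath F ν / ν.length) with hr
  have hterm : ∀ e ∈ Finset.univ.filter (fun e => src e = v ∧ rng e ∈ C),
      Real.exp (-β * F e) * Real.exp (-β * H (rng e)) ≤ r * Real.exp (-β * H v) := by
    intro e he
    simp only [Finset.mem_filter, Finset.mem_univ, true_and] at he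
    have h1 := hH e (hed e (he.1 ▸ hv) he.2)
    rw [he.1] at h1
    rw [hr, ← Real.exp_add, ← Real.exp_add]
    refine le_of_eq ?_
    congr 1
    have h2 : H (rng e) = H v - F e + Fpath F ν / ν.length := by linarith
    rw [h2]
    ring
  have hcard : (Finset.univ.filter (fun e => src e = v ∧ rng e ∈ C)).card ≤ 1 := by
    rw [Finset.card_le_one]
    intro a ha b hb
    simp only [Finset.mem_filter, Finset.mem_univ, true_and] at ha hb
    exact List.inj_on_of_nodup_map hnd (hed a (ha.1 ▸ hv) ha.2) (hed b (hb.1 ▸ hv) hb.2)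
      (ha.1.trans hb.1.symm)
  have h3 := Finset.sum_le_card_nsmul _ _ _ hterm
  have h4 : (Finset.univ.filter (fun e => src e = v ∧ rng e ∈ C)).card •
      (r * Real.exp (-β * H v)) ≤ 1 • (r * Real.exp (-β * H v)) :=
    nsmul_le_nsmul_left (by positivity) hcard
  rw [one_nsmul] at h4
  have h5 := h3.trans h4
  convert h5
  rfl

lemma circular_one_iff {V E : Type*} [Fintype V] [DecidableEq V] [Fintype E]
    {src rng : E → V} (F : E → ℝ) {β : ℝ} (hβ : 0 < β) {C : Set V} {ν : List E}
    (hν : CircularWitness src rng C ν) :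
    specRadOn (Amat src rng F β) C = 1 ↔ Fpath F ν = 0 := by
  rw [circular_specRadOn F β hν, Real.exp_eq_one_iff]
  have h0 : ν ≠ [] := (isLoop_iff.1 hν.1.1).1
  simp [hβ.ne', h0]

end Circular

section Classes

open Classical in
lemma specRadOn_lt_one_of_strict {V E : Type*} [Fintype V] [DecidableEq V] [Fintype E]
    {src rng : E → V} {F : E → ℝ} {β : ℝ} {S : Set V} {x : V → ℝ} (hx : ∀ v, 0 < x v)
    (h : ∀ v ∈ S, ∑ e ∈ Finset.univ.filter (fun e => src e = v ∧ rng e ∈ S),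
      Real.exp (-β * F e) * x (rng e) < x v) : specRadOn (Amat src rng F β) S < 1 := by
  have hev : ∀ᶠ r : ℝ in nhdsWithin 1 (Set.Iio 1), ∀ v, v ∈ S →
      ∑ e ∈ Finset.univ.filter (fun e => src e = v ∧ rng e ∈ S),
        Real.exp (-β * F e) * x (rng e) ≤ r * x v := by
    rw [Filter.eventually_all]
    intro v
    by_cases hv : v ∈ S
    · have ht : Tendsto (fun r : ℝ => r * x v) (nhdsWithin 1 (Set.Iio 1)) (nhds (1 * x v)) :=
        tendsto_nhdsWithin_of_tendsto_nhds (Continuous.tendsto (by fun_prop) 1)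
      filter_upwards [ht.eventually_const_lt (by rw [one_mul]; exact h v hv)] with r hr _
      exact hr.le
    · exact Filter.Eventually.of_forall fun _ h => absurd h hv
  have hpos : ∀ᶠ r : ℝ in nhdsWithin 1 (Set.Iio 1), 0 < r :=
    nhdsWithin_le_nhds (lt_mem_nhds one_pos)
  obtain ⟨r, ⟨h1, h2⟩, h3⟩ := ((hev.and hpos).and self_mem_nhdsWithin).exists
  refine (specRadOn_le_of_cert h2 (x := x) ⟨hx, fun v hv => ?_⟩).trans_lt h3
  convert h1 v hv

/-- The equivalence class of a vertex. -/
def gcls {V E : Type*} (src rng : E → V) (v : V) : Set V :=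
  {w | GReaches src rng v w ∧ GReaches src rng w v}

lemma gcls_eq {V E : Type*} {src rng : E → V} {v w : V} (h : w ∈ gcls src rng v) :
    gcls src rng w = gcls src rng v := by
  ext u
  exact ⟨fun hu => ⟨reaches_trans h.1 hu.1, reaches_trans hu.2 h.2⟩,
    fun hu => ⟨reaches_trans h.2 hu.1, reaches_trans hu.2 h.1⟩⟩

lemma gcls_self {V E : Type*} {src rng : E → V} (v : V) : v ∈ gcls src rng v :=
  ⟨reaches_refl v, reaches_refl v⟩

lemma gcls_no_loop {V E : Type*} [Fintype V] [DecidableEq V] [Fintype E]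
    {src rng : E → V} {F : E → ℝ} {β : ℝ} {v : V}
    (h : ¬ ∃ μ, LoopIn src rng (gcls src rng v) μ) :
    specRadOn (Amat src rng F β) (gcls src rng v) < 1 := by
  classical
  refine specRadOn_lt_one_of_strict (x := fun _ => 1) (fun _ => one_pos) fun u hu => ?_
  rw [Finset.sum_eq_zero]
  · exact one_pos
  · intro e he
    exfalso
    simp only [Finset.mem_filter, Finset.mem_univ, true_and] at he
    obtain ⟨rfl, he⟩ := he
    apply h
    have hr : GReaches src rng (rng e) (src e) := reaches_trans he.2 hu.1
    obtain ⟨μ, hμ⟩ := reaches_iff.1 hr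
    have hP : IsP src rng (src e) (e :: μ) (src e) := ⟨rfl, hμ⟩
    refine ⟨e :: μ, isLoop_iff.2 ⟨by simp, src e, hP⟩, fun f hf => ?_⟩
    obtain ⟨h1, h2⟩ := isP_mem _ _ _ hP f hf
    have h3 := reaches_edge (src := src) (rng := rng) f
    refine ⟨⟨reaches_trans hu.1 h1, ?_⟩, ⟨?_, reaches_trans h2 hu.2⟩⟩
    · exact reaches_trans h3 (reaches_trans h2 hu.2)
    · exact reaches_trans hu.1 (reaches_trans h1 h3)

lemma specRadOn_lt_one_of_classes {V E : Type*} [Fintype V] [DecidableEq V] [Fintype E]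
    {src rng : E → V} {F : E → ℝ} {β : ℝ} {D : Set V}
    (h : ∀ v ∈ D, specRadOn (Amat src rng F β) (gcls src rng v) < 1) :
    specRadOn (Amat src rng F β) D < 1 := by
  classical
  have hex : ∀ S : Set V, ∃ x : V → ℝ, (∀ v, 0 < x v) ∧
      (specRadOn (Amat src rng F β) S < 1 → ∀ v ∈ S,
        ∑ e ∈ Finset.univ.filter (fun e => src e = v ∧ rng e ∈ S),
          Real.exp (-β * F e) * x (rng e) < x v) := by
    intro S
    by_cases hS : specRadOn (Amat src rng F β) S < 1
    · obtain ⟨r, hr1, hr2⟩ := exists_between hS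
      obtain ⟨hr0, x, hx⟩ := exists_cert hr1
      refine ⟨x, hx.1, fun _ v hv => ?_⟩
      have h1 := hx.2 v hv
      have h2 : r * x v < x v := by nlinarith [hx.1 v]
      have h3 := lt_of_le_of_lt h1 h2
      convert h3
      rfl
    · exact ⟨fun _ => 1, fun _ => one_pos, fun h => absurd h hS⟩
  choose X hX0 hX using hex
  set x : V → ℝ := fun v => X (gcls src rng v) v with hxdef
  have hx0 : ∀ v, 0 < x v := fun v => hX0 _ _
  have hxc : ∀ v ∈ D, ∑ e ∈ Finset.univ.filter (fun e => src e = v ∧ rng e ∈ gcls src rng v),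
      Real.exp (-β * F e) * x (rng e) < x v := by
    intro v hv
    have := hX _ (h v hv) v (gcls_self v)
    refine lt_of_le_of_lt (le_of_eq ?_) this
    refine Finset.sum_congr rfl fun e he => ?_
    simp only [Finset.mem_filter, Finset.mem_univ, true_and] at he
    simp only [hxdef]
    rw [gcls_eq he.2]
  set K : ℝ := ∑ e, Real.exp (-β * F e) * x (rng e) with hK
  set o : V → ℕ := fun v => {u | GReaches src rng v u}.ncard with ho
  have ho1 : ∀ e : E, o (rng e) ≤ o (src e) := by
    intro e
    refine Set.ncard_le_ncard ?_ (Set.toFinite _)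
    exact fun u hu => reaches_trans (reaches_edge e) hu
  have ho2 : ∀ e : E, rng e ∉ gcls src rng (src e) → o (rng e) + 1 ≤ o (src e) := by
    intro e he
    refine Nat.succ_le_of_lt (Set.ncard_lt_ncard ?_ (Set.toFinite _))
    refine ⟨fun u hu => reaches_trans (reaches_edge e) hu, fun hsub => he ⟨reaches_edge e, ?_⟩⟩
    exact hsub (reaches_refl (src e))
  have hT : ∃ T : ℝ, 1 ≤ T ∧ ∀ v, v ∈ D → K < T * (x v -
      ∑ e ∈ Finset.univ.filter (fun e => src e = v ∧ rng e ∈ gcls src rng v),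
        Real.exp (-β * F e) * x (rng e)) := by
    have hev : ∀ᶠ T : ℝ in atTop, ∀ v, v ∈ D → K < T * (x v -
      ∑ e ∈ Finset.univ.filter (fun e => src e = v ∧ rng e ∈ gcls src rng v),
        Real.exp (-β * F e) * x (rng e)) := by
      rw [Filter.eventually_all]
      intro v
      by_cases hv : v ∈ D
      · filter_upwards [(tendsto_id.atTop_mul_const
          (sub_pos.2 (hxc v hv))).eventually_gt_atTop K] with T hT _
        exact hT
      · exact Filter.Eventually.of_forall fun _ h => absurd h hv
    obtain ⟨T, h1, h2⟩ := (hev.and (eventually_ge_atTop 1)).exists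
    exact ⟨T, h2, h1⟩
  obtain ⟨T, hT1, hT⟩ := hT
  have hT0 : 0 < T := by linarith
  refine specRadOn_lt_one_of_strict (x := fun v => T ^ (o v) * x v)
    (fun v => mul_pos (pow_pos hT0 _) (hx0 v)) fun v hv => ?_
  set P : ℝ := ∑ e ∈ Finset.univ.filter (fun e => src e = v ∧ rng e ∈ gcls src rng v),
        Real.exp (-β * F e) * x (rng e) with hP
  have hw : ∀ e, 0 ≤ Real.exp (-β * F e) * x (rng e) := fun e =>
    mul_nonneg (Real.exp_pos _).le (hx0 _).le
  -- multiply by T to avoid subtraction in the exponent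
  have hmain : T * ∑ e ∈ Finset.univ.filter (fun e => src e = v ∧ rng e ∈ D),
      Real.exp (-β * F e) * (T ^ (o (rng e)) * x (rng e)) ≤ T ^ (o v) * (T * P + K) := by
    calc _ ≤ ∑ e, ((if src e = v ∧ rng e ∈ gcls src rng v then
          T ^ (o v) * T * (Real.exp (-β * F e) * x (rng e)) else 0) +
          T ^ (o v) * (Real.exp (-β * F e) * x (rng e))) := by
          rw [Finset.mul_sum, Finset.sum_filter]
          refine Finset.sum_le_sum fun e _ => ?_
          have hwe := hw e
          have hTo : 0 < T ^ (o v) := pow_pos hT0 _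
          by_cases h1 : src e = v ∧ rng e ∈ D
          · rw [if_pos h1]
            obtain ⟨rfl, h1⟩ := h1
            by_cases h2 : rng e ∈ gcls src rng (src e)
            · rw [if_pos ⟨rfl, h2⟩]
              have h3 : T ^ (o (rng e)) ≤ T ^ (o (src e)) := pow_le_pow_right₀ hT1 (ho1 e)
              have h4 := mul_le_mul_of_nonneg_left h3
                (mul_nonneg hT0.le hwe)
              have h5 := mul_nonneg hTo.le hwe
              nlinarith
            · rw [if_neg (fun h => h2 h.2), zero_add]
              have h3 : T ^ (o (rng e) + 1) ≤ T ^ (o (src e)) := pow_le_pow_right₀ hT1 (ho2 e h2)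
              have h4 := mul_le_mul_of_nonneg_right h3 hwe
              rw [pow_succ] at h4
              linarith
          · rw [if_neg h1]
            split_ifs <;> positivity
      _ = _ := by
          rw [Finset.sum_add_distrib, ← Finset.sum_filter, ← Finset.mul_sum, ← Finset.mul_sum]
          ring
  have h1 := hT v hv
  have h2 : T ^ (o v) * (T * P + K) < T ^ (o v) * (T * x v) :=
    mul_lt_mul_of_pos_left (by linarith) (pow_pos hT0 _)
  have h3 := hmain.trans_lt h2
  rw [mul_left_comm] at h3
  exact lt_of_mul_lt_mul_left h3 hT0.le

end Classes

/-- For `β > 0` and a circular component `C` with loop `ν`: `C` is `A(β)`-harmonic iff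
`F(ν) = 0`, all loops in `C̄ ∖ C` have `F > 0`, and every component `C' ⊆ C̄ ∖ C` satisfies
`ρ(A(β')^{C'}) = 1` for some `β' < β`. -/
theorem isAharmonic_iff_pos_circular {V E : Type*} [Fintype V] [DecidableEq V] [Fintype E]
    (src rng : E → V) (F : E → ℝ)
    (β : ℝ) (hβ : 0 < β)
    (C : Set V) (hC : GIsComponent src rng C)
    (ν : List E) (hν : CircularWitness src rng C ν) :
    (specRadOn (Amat src rng F β) C = 1 ∧
      ((GClosure src rng C \ C).Nonempty →
        specRadOn (Amat src rng F β) (GClosure src rng C \ C) < 1)) ↔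
    (Fpath F ν = 0 ∧
      (∀ μ : List E, LoopIn src rng (GClosure src rng C \ C) μ → 0 < Fpath F μ) ∧
      (∀ C' : Set V, GIsComponent src rng C' → C' ⊆ GClosure src rng C \ C →
        ∃ β' : ℝ, β' < β ∧ specRadOn (Amat src rng F β') C' = 1)) := by
  set D := GClosure src rng C \ C with hD
  rw [circular_one_iff F hβ hν]
  refine and_congr_right fun _ => ?_
  constructor
  · intro h
    refine ⟨fun μ hμ => ?_, fun C' hC' hsub => ?_⟩
    · have hne : D.Nonempty := by
        obtain ⟨h0, -⟩ := isLoop_iff.1 hμ.1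
        exact ⟨_, (hμ.2 _ (List.head_mem h0)).1⟩
      have h1 := (loop_le_specRadOn F β hμ).trans_lt (h hne)
      rw [Real.exp_lt_one_iff] at h1
      have hlen : (0 : ℝ) < μ.length := by
        have := (isLoop_iff.1 hμ.1).1
        exact_mod_cast List.length_pos_iff.2 this
      rw [div_neg_iff] at h1
      rcases h1 with h1 | h1
      · linarith [h1.2]
      · nlinarith [h1.1]
    · obtain ⟨μ, hμ⟩ := hC'.2
      have hne : D.Nonempty := by
        obtain ⟨h0, -⟩ := isLoop_iff.1 hμ.1
        exact ⟨_, hsub (hμ.2 _ (List.head_mem h0)).1⟩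
      refine exists_beta hβ ⟨μ, hμ⟩ ?_
      obtain ⟨r, hr1, hr2⟩ := exists_between (h hne)
      obtain ⟨hr0, x, hx⟩ := exists_cert hr1
      exact (specRadOn_le_of_cert hr0 (hx.mono_set hsub)).trans_lt hr2
  · rintro ⟨hpos, hcomp⟩ _
    refine specRadOn_lt_one_of_classes fun v hv => ?_
    by_cases hl : ∃ μ, LoopIn src rng (gcls src rng v) μ
    · have hsub : gcls src rng v ⊆ D := by
        intro w hw
        obtain ⟨⟨c, hc, hvc⟩, hvC⟩ := hv
        refine ⟨⟨c, hc, reaches_trans hw.2 hvc⟩, fun hwC => hvC ?_⟩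
        obtain ⟨⟨u, rfl⟩, -⟩ := hC
        exact ⟨reaches_trans hwC.1 hw.2, reaches_trans hw.1 hwC.2⟩
      obtain ⟨β', hb, h1⟩ := hcomp (gcls src rng v) ⟨⟨v, rfl⟩, hl⟩ hsub
      exact specRadOn_lt_of_loops hb
        (fun μ hμ => hpos μ ⟨hμ.1, fun e he => ⟨hsub (hμ.2 e he).1, hsub (hμ.2 e he).2⟩⟩) h1
    · exact gcls_no_loop hl
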